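/- arXiv:1607.05031 — 2 statements merged into one kernel-verified Lean document; each statement's English description precedes it below -/
import Mathlib

section
/- Let G be a finite simple graph with independence number α(G), and let m be a natural number with m > α(G), so that the independent-set system of (G,m) has no common zero over ℂ. Then the minimum degree of a Nullstellensatz certificate for this system equals α(G): there exists a Nullstellensatz certificate of degree α(G), and every Nullstellensatz certificate for the system has degree at least α(G). -/
open MvPolynomial

/-- A finset of vertices is independent: no two of its members are adjacent. -/
def IsIndepFinset {V : Type*} (G : SimpleGraph V) (s : Finset V) : Prop :=
  ∀ u ∈ s, ∀ v ∈ s, ¬ G.Adj u v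

/-- The independence number of `G`: the maximum cardinality of an independent set. -/
noncomputable def indepNum (V : Type*) [Fintype V] (G : SimpleGraph V) : ℕ :=
  sSup {k : ℕ | ∃ s : Finset V, IsIndepFinset G s ∧ s.card = k}

/-- The monomial `x_u · x_v` attached to the edge `{u, v}`. -/
noncomputable def edgeMon {V : Type*} (e : Sym2 V) : MvPolynomial V ℂ :=
  Sym2.lift ⟨fun u v => X u * X v, fun _ _ => mul_comm _ _⟩ e

/-!
Write `α` for the independence number and, for a parameter `c` outside `{0, …, α}`, put
`a k = -k! / ∏_{i ≤ k} (c - i)`. Modulo the relations `x_v² = x_v` and `x_u x_v = 0` for adjacent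
`u, v`, the squarefree monomials of independent sets span everything, and multiplying the one of `S`
by `x_v` gives the one of `S ∪ {v}` (or zero). The recursion `(k + 1) (a (k + 1) + a k) =
c * a (k + 1)` then says exactly that `∑_S a |S| x_S`, over independent `S`, inverts `∑ x_v - c`
modulo the relations; all multipliers involved have degree at most `α`.

Conversely, the relations vanish at the indicator of an independent set `T`, so there the multiplier
of `∑ x_v - c` in any certificate takes the value `(|T| - c)⁻¹`. Fix an independent set `S` with `α`
elements. The alternating sum of the values at the indicators of all `T ⊆ S` kills every polynomial
of degree less than `α`, but on the explicit multiplier above, hence on every other one, it takes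
the value `(-1)^α a α ≠ 0`.
-/

open Finset

section BoundedCombinations

variable {ι σ R : Type*} [CommSemiring R]

/-- The combinations `∑ i ∈ s, β i * g i` whose multipliers `β i` have total degree at most `k`. -/
def boundedCombinations (s : Finset ι) (g : ι → MvPolynomial σ R) (k : ℕ) :
    Submodule R (MvPolynomial σ R) where
  carrier := {p | ∃ β : ι → MvPolynomial σ R,
    (∀ i, (β i).totalDegree ≤ k) ∧ ∑ i ∈ s, β i * g i = p}
  zero_mem' := ⟨0, by simp, by simp⟩
  add_mem' := by
    rintro _ _ ⟨β, hβ, rfl⟩ ⟨γ, hγ, rfl⟩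
    refine ⟨β + γ, fun i => (totalDegree_add _ _).trans (max_le (hβ i) (hγ i)), ?_⟩
    simp only [Pi.add_apply, add_mul, sum_add_distrib]
  smul_mem' := by
    rintro a _ ⟨β, hβ, rfl⟩
    refine ⟨a • β, fun i => (totalDegree_smul_le _ _).trans (hβ i), ?_⟩
    simp only [Pi.smul_apply, smul_mul_assoc, smul_sum]

theorem mul_mem_boundedCombinations {s : Finset ι} {g : ι → MvPolynomial σ R} {k : ℕ} {i : ι}
    (hi : i ∈ s) {q : MvPolynomial σ R} (hq : q.totalDegree ≤ k) :
    q * g i ∈ boundedCombinations s g k := by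
  classical
  refine ⟨Pi.single i q, fun j => ?_, ?_⟩
  · obtain rfl | hj := eq_or_ne j i
    · simpa using hq
    · simp [hj]
  · rw [sum_eq_single_of_mem i hi fun j _ hj => by simp [hj], Pi.single_eq_same]

end BoundedCombinations

section AlternatingSum

variable {σ R : Type*} [CommRing R]

/-- The alternating sum `∑ T ⊆ S, (-1)^|T| p(1_T)` of the values of a polynomial `p` over the
indicators of the subsets of `S`, as a linear functional of `p`. Up to the sign `(-1)^|S|` it is the
coefficient of `∏ v ∈ S, X v` in the multilinear polynomial agreeing with `p` on that cube. -/
noncomputable def alternatingSum (S : Finset σ) : MvPolynomial σ R →ₗ[R] R :=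
  ∑ T ∈ S.powerset, (-1 : R) ^ #T • (aeval (Set.indicator (T : Set σ) (1 : σ → R))).toLinearMap

theorem alternatingSum_apply (S : Finset σ) (p : MvPolynomial σ R) :
    alternatingSum S p =
      ∑ T ∈ S.powerset, (-1) ^ #T * eval (Set.indicator (T : Set σ) 1) p := by
  simp [alternatingSum, aeval_eq_eval]

theorem alternatingSum_eq_zero_of_notMem_vars {S : Finset σ} {p : MvPolynomial σ R} {v : σ}
    (hvS : v ∈ S) (hvp : v ∉ p.vars) : alternatingSum S p = 0 := by
  classical
  rw [alternatingSum_apply, ← insert_erase hvS, sum_powerset_insert (notMem_erase v S),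
    ← sum_add_distrib]
  refine sum_eq_zero fun T hT => ?_
  have hvT : v ∉ T := fun h => notMem_erase v S (mem_powerset.1 hT h)
  have eval_insert : eval (Set.indicator (insert v T : Finset σ) 1) p =
      eval (Set.indicator (T : Set σ) (1 : σ → R)) p := by
    refine eval₂Hom_congr' rfl (fun w hw _ => ?_) rfl
    have hwv : w ≠ v := fun h => hvp (h ▸ hw)
    simp [Set.indicator_apply, hwv]
  rw [eval_insert, card_insert_of_notMem hvT]
  ring

theorem alternatingSum_eq_zero_of_totalDegree_lt {S : Finset σ} {p : MvPolynomial σ R}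
    (hp : p.totalDegree < #S) : alternatingSum S p = 0 := by
  rw [← p.support_sum_monomial_coeff, map_sum]
  refine sum_eq_zero fun d hd => ?_
  have card_support_lt : #d.support < #S :=
    calc #d.support = ∑ _i ∈ d.support, 1 := card_eq_sum_ones _
      _ ≤ d.sum fun _ e => e :=
        sum_le_sum fun _ hi => Nat.one_le_iff_ne_zero.2 (Finsupp.mem_support_iff.1 hi)
      _ ≤ p.totalDegree := le_totalDegree hd
      _ < #S := hp
  obtain ⟨v, hvS, hvd⟩ := exists_mem_notMem_of_card_lt_card card_support_lt
  refine alternatingSum_eq_zero_of_notMem_vars hvS ?_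
  rwa [vars_monomial (mem_support_iff.1 hd)]

theorem alternatingSum_prod_X (S : Finset σ) :
    alternatingSum S (∏ v ∈ S, X v : MvPolynomial σ R) = (-1) ^ #S := by
  rw [alternatingSum_apply, sum_eq_single_of_mem S (mem_powerset_self S)]
  · rw [map_prod, prod_eq_one fun v hv => by simp [hv], mul_one]
  · intro T hT hTS
    obtain ⟨v, hvS, hvT⟩ := exists_of_ssubset ((mem_powerset.1 hT).ssubset_of_ne hTS)
    rw [map_prod, prod_eq_zero hvS (by simp [hvT]), mul_zero]

end AlternatingSum

theorem sum_sum_insert {V M : Type*} [Fintype V] [DecidableEq V] [AddCommMonoid M]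
    (f : Finset V → Finset V → M) :
    ∑ S, ∑ v, f S (insert v S) = ∑ S, ∑ v ∈ S, (f S S + f (S.erase v) S) := by
  have sum_insert_fixed (v : V) :
      ∑ S, f S (insert v S) = ∑ S with v ∈ S, (f S S + f (S.erase v) S) := by
    rw [← sum_filter_add_sum_filter_not univ (v ∈ ·), sum_add_distrib]
    congr 1
    · refine sum_congr rfl fun S hS => ?_
      rw [insert_eq_of_mem (mem_filter.1 hS).2]
    · refine sum_bij' (fun S _ => insert v S) (fun S _ => S.erase v) ?_ ?_ ?_ ?_ ?_ <;>
        simp +contextual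
  rw [sum_comm, sum_congr rfl fun v _ => sum_insert_fixed v]
  exact sum_comm' (by simp)

section IndepMonomial

variable {V : Type*} (R : Type*) [CommSemiring R] {G : SimpleGraph V}

theorem exists_adj_of_not_isIndepSet_insert {s : Set V} {v : V} (hs : G.IsIndepSet s)
    (hvs : ¬ G.IsIndepSet (insert v s)) : ∃ u ∈ s, G.Adj u v := by
  by_contra! h
  exact hvs (hs.insert fun u hu _ => ⟨fun huv => h u hu huv.symm, h u hu⟩)

variable (G) in
open Classical in
/-- The squarefree monomial `∏ v ∈ S, X v` if `S` is independent in `G`, and `0` otherwise: the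
normal form of that monomial modulo the edge monomials of `G`. -/
noncomputable def indepMonomial (S : Finset V) : MvPolynomial V R :=
  if G.IsIndepSet S then ∏ v ∈ S, X v else 0

theorem indepMonomial_of_isIndepSet {S : Finset V} (hS : G.IsIndepSet S) :
    indepMonomial R G S = ∏ v ∈ S, X v :=
  if_pos hS

theorem indepMonomial_of_not_isIndepSet {S : Finset V} (hS : ¬ G.IsIndepSet S) :
    indepMonomial R G S = 0 :=
  if_neg hS

theorem totalDegree_prod_X_le (S : Finset V) :
    (∏ v ∈ S, X v : MvPolynomial V R).totalDegree ≤ #S := by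
  rw [card_eq_sum_ones]
  exact (IsHomogeneous.prod S _ _ fun v _ => isHomogeneous_X R v).totalDegree_le

variable (G)

theorem totalDegree_indepMonomial_le [Finite V] (S : Finset V) :
    (indepMonomial R G S).totalDegree ≤ G.indepNum := by
  by_cases hS : G.IsIndepSet S
  · rw [indepMonomial_of_isIndepSet R hS]
    exact (totalDegree_prod_X_le R S).trans hS.card_le_indepNum
  · simp [indepMonomial_of_not_isIndepSet R hS]

theorem vars_indepMonomial_subset (S : Finset V) : (indepMonomial R G S).vars ⊆ S := by
  classical
  cases subsingleton_or_nontrivial R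
  · simp [Subsingleton.elim (indepMonomial R G S) 0]
  by_cases hS : G.IsIndepSet S
  · rw [indepMonomial_of_isIndepSet R hS]
    simpa [vars_X] using vars_prod (s := S) (X : V → MvPolynomial V R)
  · simp [indepMonomial_of_not_isIndepSet R hS]

end IndepMonomial

section IndepSetRelations

variable {V : Type*} [Fintype V] (R : Type*) [CommRing R] (G : SimpleGraph V) [Fintype G.edgeSet]

/-- The combinations of the edge monomials `x_u x_v` and the Boolean polynomials `x_v² - x_v` with
multipliers of total degree at most `k`. -/
noncomputable def indepSetRelations (k : ℕ) : Submodule R (MvPolynomial V R) :=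
  boundedCombinations G.edgeFinset (fun e => (e.map X).mul) k ⊔
    boundedCombinations univ (fun v => X v ^ 2 - X v) k

variable {R G}

theorem mul_X_mul_X_mem_indepSetRelations {k : ℕ} {q : MvPolynomial V R}
    (hq : q.totalDegree ≤ k) {u v : V} (huv : G.Adj u v) :
    q * (X u * X v) ∈ indepSetRelations R G k :=
  Submodule.mem_sup_left <|
    mul_mem_boundedCombinations (i := s(u, v)) (SimpleGraph.mem_edgeFinset.2 huv) hq

theorem mul_X_sq_sub_X_mem_indepSetRelations {k : ℕ} {q : MvPolynomial V R}
    (hq : q.totalDegree ≤ k) (v : V) :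
    q * (X v ^ 2 - X v) ∈ indepSetRelations R G k :=
  Submodule.mem_sup_right <| mul_mem_boundedCombinations (mem_univ v) hq

theorem indepMonomial_mul_X_sub_mem_indepSetRelations [DecidableEq V] (S : Finset V) (v : V) :
    indepMonomial R G S * X v - indepMonomial R G (insert v S) ∈
      indepSetRelations R G G.indepNum := by
  by_cases hS : G.IsIndepSet S
  swap
  · have hvS : ¬ G.IsIndepSet (insert v S : Finset V) := fun h =>
      hS (h.mono (by simp))
    simp [indepMonomial_of_not_isIndepSet R hS, indepMonomial_of_not_isIndepSet R hvS]
  have degree_erase (u : V) : (∏ w ∈ S.erase u, X w : MvPolynomial V R).totalDegree ≤ G.indepNum :=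
    (totalDegree_prod_X_le R _).trans (card_erase_le.trans hS.card_le_indepNum)
  rw [indepMonomial_of_isIndepSet R hS]
  by_cases hv : v ∈ S
  · rw [insert_eq_of_mem hv, indepMonomial_of_isIndepSet R hS, ← mul_prod_erase S X hv]
    convert mul_X_sq_sub_X_mem_indepSetRelations (degree_erase v) v using 1
    ring
  by_cases hvS : G.IsIndepSet (insert v S : Finset V)
  · rw [indepMonomial_of_isIndepSet R hvS, prod_insert hv, mul_comm, sub_self]
    exact zero_mem _
  · obtain ⟨u, hu, huv⟩ := exists_adj_of_not_isIndepSet_insert hS (by simpa using hvS)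
    rw [indepMonomial_of_not_isIndepSet R hvS, sub_zero, ← mul_prod_erase S X hu]
    convert mul_X_mul_X_mem_indepSetRelations (degree_erase u) huv using 1
    ring

end IndepSetRelations

section Certificate

variable {V R : Type*} [Fintype V] [CommRing R] (G : SimpleGraph V) [Fintype G.edgeSet]

/-- The multipliers `A` (of `∑ v, x_v - c`), `Q` (of the edge monomials) and `P` (of the Boolean
polynomials) form a Nullstellensatz certificate for the independent-set system of `(G, c)`. -/
def IsIndepSetCertificate (c : R) (A : MvPolynomial V R) (Q : Sym2 V → MvPolynomial V R)
    (P : V → MvPolynomial V R) : Prop :=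
  A * ((∑ v, X v) - C c) + (∑ e ∈ G.edgeFinset, Q e * (e.map X).mul) +
    (∑ v, P v * (X v ^ 2 - X v)) = 1

/-- The degree of a certificate: the largest total degree of a multiplier. Only the values of `Q` at
edges of `G` count. -/
def certificateDegree (A : MvPolynomial V R) (Q : Sym2 V → MvPolynomial V R)
    (P : V → MvPolynomial V R) : ℕ :=
  max A.totalDegree
    (max (G.edgeFinset.sup fun e => (Q e).totalDegree) (univ.sup fun v => (P v).totalDegree))

variable {G}

theorem exists_isIndepSetCertificate_of_mem_indepSetRelations {c : R} {k : ℕ} {A : MvPolynomial V R}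
    (hA : A.totalDegree ≤ k)
    (hmem : A * ((∑ v, X v) - C c) - 1 ∈ indepSetRelations R G k) :
    ∃ Q P, IsIndepSetCertificate G c A Q P ∧ certificateDegree G A Q P ≤ k := by
  obtain ⟨_, ⟨Q, hQ, rfl⟩, _, ⟨P, hP, rfl⟩, h⟩ := Submodule.mem_sup.1 (neg_mem hmem)
  refine ⟨Q, P, ?_, max_le hA (max_le (Finset.sup_le fun e _ => hQ e)
    (Finset.sup_le fun v _ => hP v))⟩
  rw [IsIndepSetCertificate, add_assoc, h]
  ring

theorem IsIndepSetCertificate.eval_indicator_mul {c : R} {A : MvPolynomial V R}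
    {Q : Sym2 V → MvPolynomial V R} {P : V → MvPolynomial V R}
    (h : IsIndepSetCertificate G c A Q P) {T : Finset V} (hT : G.IsIndepSet T) :
    eval (Set.indicator (T : Set V) 1) A * (#T - c) = 1 := by
  classical
  have edge_eq_zero : ∀ e ∈ G.edgeFinset,
      eval (Set.indicator (T : Set V) 1) (Q e * (e.map X).mul) = 0 := by
    intro e he
    induction e with | _ u v
    have huv : G.Adj u v := SimpleGraph.mem_edgeFinset.1 he
    by_cases hu : u ∈ T
    · have hv : v ∉ T := fun hv => hT hu hv huv.ne huv
      simp [hv]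
    · simp [hu]
  have boolean_eq_zero (v : V) :
      eval (Set.indicator (T : Set V) 1) (P v * (X v ^ 2 - X v)) = 0 := by
    by_cases hv : v ∈ T <;> simp [hv]
  have eval_sum : eval (Set.indicator (T : Set V) 1) ((∑ v, X v) - C c) = #T - c := by
    simp [Set.indicator_apply]
  have eval_eq := congrArg (eval (Set.indicator (T : Set V) 1)) h
  rwa [map_add, map_add, map_sum, map_sum, sum_eq_zero edge_eq_zero,
    sum_eq_zero fun v _ => boolean_eq_zero v, add_zero, add_zero, map_mul, eval_sum,
    map_one] at eval_eq

theorem IsIndepSetCertificate.alternatingSum_eq {c : R} {A B : MvPolynomial V R}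
    {Q Q' : Sym2 V → MvPolynomial V R} {P P' : V → MvPolynomial V R}
    (hA : IsIndepSetCertificate G c A Q P) (hB : IsIndepSetCertificate G c B Q' P')
    {S : Finset V} (hS : G.IsIndepSet S) : alternatingSum S A = alternatingSum S B := by
  rw [alternatingSum_apply, alternatingSum_apply]
  refine sum_congr rfl fun T hT => congrArg _ ?_
  have hT : G.IsIndepSet T := hS.mono (coe_subset.2 (mem_powerset.1 hT))
  exact left_inv_eq_right_inv (hA.eval_indicator_mul hT)
    ((mul_comm _ _).trans (hB.eval_indicator_mul hT))

end Certificate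

section CertificateCoeff

variable {K : Type*} [Field K] {c : K}

/-- The coefficient of the monomials of independent `k`-sets in the certificate for `(G, c)`. It is
meaningful only if `c ∉ {0, …, k}`, as otherwise the denominator vanishes. -/
def certificateCoeff (c : K) (k : ℕ) : K :=
  -(k.factorial : K) / ∏ i ∈ range (k + 1), (c - i)

theorem certificateCoeff_zero_mul (hc : c ≠ 0) : certificateCoeff c 0 * c = -1 := by
  simp [certificateCoeff, hc]

theorem succ_mul_certificateCoeff_succ_add {k : ℕ} (hk : ((k + 1 : ℕ) : K) ≠ c) :
    (k + 1 : ℕ) * (certificateCoeff c (k + 1) + certificateCoeff c k) =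
      certificateCoeff c (k + 1) * c := by
  have hk' : c - (k + 1 : ℕ) ≠ 0 := sub_ne_zero.2 hk.symm
  have coeff_succ : certificateCoeff c (k + 1) * (c - (k + 1 : ℕ)) =
      (k + 1 : ℕ) * certificateCoeff c k := by
    rw [certificateCoeff, prod_range_succ, div_mul_eq_mul_div, mul_div_mul_right _ _ hk',
      certificateCoeff, Nat.factorial_succ, Nat.cast_mul]
    ring
  linear_combination -coeff_succ

theorem certificateCoeff_ne_zero {k : ℕ} (hk : (k.factorial : K) ≠ 0)
    (hc : ∀ i ≤ k, (i : K) ≠ c) : certificateCoeff c k ≠ 0 :=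
  div_ne_zero (neg_ne_zero.2 hk) <| prod_ne_zero_iff.2 fun i hi =>
    sub_ne_zero.2 (hc i (Nat.lt_succ_iff.1 (mem_range.1 hi))).symm

end CertificateCoeff

section MinimumDegree

variable {V K : Type*} [Fintype V] [Field K] (G : SimpleGraph V) {c : K}

/-- The multiplier `∑ a_{|S|} ∏ v ∈ S, x_v` of `∑ v, x_v - c`, over the independent sets `S`, in the
certificate of minimum degree. -/
noncomputable def certificatePolynomial (c : K) : MvPolynomial V K :=
  ∑ S : Finset V, certificateCoeff c #S • indepMonomial K G S

theorem totalDegree_certificatePolynomial_le (c : K) :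
    (certificatePolynomial G c).totalDegree ≤ G.indepNum :=
  totalDegree_finsetSum_le fun S _ =>
    (totalDegree_smul_le _ _).trans (totalDegree_indepMonomial_le K G S)

variable {G}

theorem sum_certificateCoeff_smul_eq_one [DecidableEq V] (hc : ∀ k ≤ G.indepNum, (k : K) ≠ c) :
    ∑ S : Finset V, certificateCoeff c #S •
      (∑ v, indepMonomial K G (insert v S) - c • indepMonomial K G S) = 1 := by
  have collect (S : Finset V) :
      ∑ v ∈ S, (certificateCoeff c #S • indepMonomial K G S +
          certificateCoeff c #(S.erase v) • indepMonomial K G S) -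
        certificateCoeff c #S • c • indepMonomial K G S =
      (#S * (certificateCoeff c #S + certificateCoeff c (#S - 1)) - certificateCoeff c #S * c) •
        indepMonomial K G S := by
    rw [sum_congr rfl fun v hv => by rw [card_erase_of_mem hv, ← add_smul], sum_const,
      ← Nat.cast_smul_eq_nsmul K, smul_smul, smul_smul, ← sub_smul]
  simp_rw [smul_sub, smul_sum]
  rw [sum_sub_distrib, sum_sum_insert fun S T => certificateCoeff c #S • indepMonomial K G T,
    ← sum_sub_distrib, sum_congr rfl fun S _ => collect S,
    sum_eq_single_of_mem ∅ (mem_univ _)]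
  · have hc₀ : c ≠ 0 := by simpa using (hc 0 (Nat.zero_le _)).symm
    simp [certificateCoeff_zero_mul hc₀, indepMonomial]
  · intro S _ hS
    by_cases hindep : G.IsIndepSet S
    · obtain ⟨k, hk⟩ := Nat.exists_eq_succ_of_ne_zero (card_ne_zero.2 (nonempty_iff_ne_empty.2 hS))
      have hkc : ((k + 1 : ℕ) : K) ≠ c := hc _ (hk.ge.trans hindep.card_le_indepNum)
      rw [hk, Nat.succ_sub_one, succ_mul_certificateCoeff_succ_add hkc, sub_self, zero_smul]
    · rw [indepMonomial_of_not_isIndepSet K hindep, smul_zero]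

theorem alternatingSum_certificatePolynomial {S : Finset V} (hS : G.IsIndepSet S)
    (hcard : #S = G.indepNum) (c : K) :
    alternatingSum S (certificatePolynomial G c) = (-1) ^ #S * certificateCoeff c #S := by
  rw [certificatePolynomial, map_sum, sum_eq_single_of_mem S (mem_univ S)]
  · rw [map_smul, indepMonomial_of_isIndepSet K hS, alternatingSum_prod_X, smul_eq_mul, mul_comm]
  · intro T _ hTS
    rw [map_smul, smul_eq_zero]
    right
    by_cases hT : G.IsIndepSet T
    · have hST : ¬ S ⊆ T := fun h =>
        hTS (eq_of_subset_of_card_le h (hcard ▸ hT.card_le_indepNum)).symm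
      obtain ⟨v, hvS, hvT⟩ := not_subset.1 hST
      exact alternatingSum_eq_zero_of_notMem_vars hvS fun hv =>
        hvT (vars_indepMonomial_subset K G T hv)
    · rw [indepMonomial_of_not_isIndepSet K hT, map_zero]

variable [Fintype G.edgeSet]

theorem certificatePolynomial_mul_sub_one_mem_indepSetRelations
    (hc : ∀ k ≤ G.indepNum, (k : K) ≠ c) :
    certificatePolynomial G c * ((∑ v, X v) - C c) - 1 ∈ indepSetRelations K G G.indepNum := by
  classical
  have reduce (S : Finset V) : indepMonomial K G S * ((∑ v, X v) - C c) -
        (∑ v, indepMonomial K G (insert v S) - c • indepMonomial K G S) =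
      ∑ v, (indepMonomial K G S * X v - indepMonomial K G (insert v S)) := by
    rw [sum_sub_distrib, ← mul_sum, smul_eq_C_mul]
    ring
  rw [← sum_certificateCoeff_smul_eq_one hc, certificatePolynomial, sum_mul, ← sum_sub_distrib]
  refine sum_mem fun S _ => ?_
  rw [smul_mul_assoc, ← smul_sub, reduce]
  exact Submodule.smul_mem _ _ <| sum_mem fun v _ =>
    indepMonomial_mul_X_sub_mem_indepSetRelations S v

theorem exists_isIndepSetCertificate_certificateDegree_le (hc : ∀ k ≤ G.indepNum, (k : K) ≠ c) :
    ∃ Q P, IsIndepSetCertificate G c (certificatePolynomial G c) Q P ∧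
      certificateDegree G (certificatePolynomial G c) Q P ≤ G.indepNum :=
  exists_isIndepSetCertificate_of_mem_indepSetRelations (totalDegree_certificatePolynomial_le G c)
    (certificatePolynomial_mul_sub_one_mem_indepSetRelations hc)

theorem IsIndepSetCertificate.indepNum_le_totalDegree {A : MvPolynomial V K}
    {Q : Sym2 V → MvPolynomial V K} {P : V → MvPolynomial V K}
    (h : IsIndepSetCertificate G c A Q P) (hfact : (G.indepNum.factorial : K) ≠ 0)
    (hc : ∀ k ≤ G.indepNum, (k : K) ≠ c) : G.indepNum ≤ A.totalDegree := by
  by_contra! hlt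
  obtain ⟨S, hS, hcard⟩ := G.exists_isNIndepSet_indepNum
  obtain ⟨Q', P', hcert, -⟩ := exists_isIndepSetCertificate_certificateDegree_le hc
  have alternatingSum_ne_zero : alternatingSum S A ≠ 0 := by
    rw [h.alternatingSum_eq hcert hS, alternatingSum_certificatePolynomial hS hcard, hcard]
    exact mul_ne_zero (pow_ne_zero _ (neg_ne_zero.2 one_ne_zero))
      (certificateCoeff_ne_zero hfact hc)
  exact alternatingSum_ne_zero (alternatingSum_eq_zero_of_totalDegree_lt (hcard ▸ hlt))

theorem stmt1_general (hfact : (G.indepNum.factorial : K) ≠ 0)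
    (hc : ∀ k ≤ G.indepNum, (k : K) ≠ c) :
    (∃ A Q P, IsIndepSetCertificate G c A Q P ∧ certificateDegree G A Q P = G.indepNum) ∧
      ∀ A Q P, IsIndepSetCertificate G c A Q P → G.indepNum ≤ certificateDegree G A Q P := by
  have lower_bound (A Q P) (h : IsIndepSetCertificate G c A Q P) :
      G.indepNum ≤ certificateDegree G A Q P :=
    (h.indepNum_le_totalDegree hfact hc).trans (le_max_left _ _)
  obtain ⟨Q, P, h, hdeg⟩ := exists_isIndepSetCertificate_certificateDegree_le hc
  exact ⟨⟨_, Q, P, h, hdeg.antisymm (lower_bound _ Q P h)⟩, lower_bound⟩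

end MinimumDegree

theorem isIndepFinset_iff_isIndepSet {V : Type*} {G : SimpleGraph V} {s : Finset V} :
    IsIndepFinset G s ↔ G.IsIndepSet s :=
  ⟨fun h _ hu _ hv _ => h _ hu _ hv, fun h _ hu _ hv huv => h hu hv huv.ne huv⟩

theorem indepNum_eq_simpleGraph_indepNum {V : Type*} [Fintype V] (G : SimpleGraph V) :
    indepNum V G = G.indepNum := by
  simp only [indepNum, SimpleGraph.indepNum, isIndepFinset_iff_isIndepSet,
    SimpleGraph.isNIndepSet_iff]

theorem edgeMon_eq_mul_map_X {V : Type*} (e : Sym2 V) : edgeMon e = (e.map X).mul := by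
  induction e with | _ u v
  rfl

/-- If `m > α(G)` (so the independent-set system of `(G,m)` is
infeasible over `ℂ`), then the minimum degree of a Nullstellensatz certificate
for the system equals `α(G)`: a certificate of degree `α(G)` exists, and every
certificate has degree at least `α(G)`. -/
theorem stmt1 {V : Type*} [Fintype V] [DecidableEq V] (G : SimpleGraph V)
    [DecidableRel G.Adj] (m : ℕ) (hm : indepNum V G < m) :
    (∃ (A : MvPolynomial V ℂ) (Q : Sym2 V → MvPolynomial V ℂ)
        (P : V → MvPolynomial V ℂ),
      A * ((∑ v : V, X v) - (m : MvPolynomial V ℂ)) +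
          (∑ e ∈ G.edgeFinset, Q e * edgeMon e) +
          (∑ v : V, P v * ((X v) ^ 2 - X v)) = 1 ∧
      max A.totalDegree
        (max (G.edgeFinset.sup fun e => (Q e).totalDegree)
          (Finset.univ.sup fun v => (P v).totalDegree)) = indepNum V G) ∧
    (∀ (A : MvPolynomial V ℂ) (Q : Sym2 V → MvPolynomial V ℂ)
        (P : V → MvPolynomial V ℂ),
      A * ((∑ v : V, X v) - (m : MvPolynomial V ℂ)) +
          (∑ e ∈ G.edgeFinset, Q e * edgeMon e) +
          (∑ v : V, P v * ((X v) ^ 2 - X v)) = 1 →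
      indepNum V G ≤
        max A.totalDegree
          (max (G.edgeFinset.sup fun e => (Q e).totalDegree)
            (Finset.univ.sup fun v => (P v).totalDegree))) := by
  rw [indepNum_eq_simpleGraph_indepNum] at hm ⊢
  simpa only [IsIndepSetCertificate, certificateDegree, map_natCast, edgeMon_eq_mul_map_X] using
    stmt1_general (K := ℂ) (c := m) (Nat.cast_ne_zero.2 (Nat.factorial_ne_zero _))
      fun k hk => Nat.cast_injective.ne (hk.trans_lt hm).ne
end

section
/- Let G be a finite simple graph with an even number 2m of vertices, and work in the polynomial ring ℂ[x_e : e ∈ E(G)]. Let I₁ be the ideal generated by the perfect-matching polynomials (∑_{e∋v} x_e) − 1 for each vertex v, together with x_e·x_{e'} for each pair of distinct edges e, e' sharing a vertex. Let I₂ be the ideal generated by x_e² − x_e for each edge e, x_e·x_{e'} for each pair of distinct edges sharing a vertex, and (∑_{e∈E(G)} x_e) − m. Then: (i) x_e² − x_e ∈ I₁ for every edge e; (ii) both I₁ and I₂ are radical ideals; and (iii) I₁ = I₂. -/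
open MvPolynomial Finset

/-- The perfect-matching vertex polynomial `(∑_{e ∋ v} x_e) − 1`. -/
noncomputable def pmVertexPoly {V : Type*} [Fintype V] [DecidableEq V]
    (G : SimpleGraph V) [DecidableRel G.Adj] (v : V) :
    MvPolynomial ↥G.edgeSet ℂ :=
  (∑ e ∈ Finset.univ.filter (fun e : ↥G.edgeSet => v ∈ (e : Sym2 V)), X e) - 1

/-!
Both ideals are determined by the solutions `x : E(G) → A` of their generators in commutative
`K`-algebras `A`, so it suffices to compare the two systems of equations in such an `A`. Write
`s v = ∑_{e ∋ v} x_e` and suppose that distinct incident edges have product zero.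

If every `s v` is `1`, then `x_e = x_e * s v = x_e²` for any endpoint `v` of `e`, and counting
incidences gives `2 * ∑ x_e = ∑ s v = 2m`. Conversely, if the `x_e` are idempotent with sum `m`,
then the `1 - s v` are idempotents with sum `2m - 2m = 0`, and in a torsion-free commutative ring
this forces each of them to vanish.

For radicality, a local `K`-algebra has only the idempotents `0` and `1`. Hence an algebra generated
by idempotents over a field `K` has image `K` in each of its localizations at maximal ideals, and is
therefore reduced.
-/

section Idempotents

variable {A : Type*} [CommRing A]

lemma eq_zero_of_natCast_add_sum_mul_eq_zero [IsAddTorsionFree A] {ι : Type*} {f : ι → A}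
    (s : Finset ι) (hf : ∀ i ∈ s, IsIdempotentElem (f i)) {n : ℕ} (hn : n ≠ 0) {a : A}
    (h : (n + ∑ i ∈ s, f i) * a = 0) : a = 0 := by
  classical
  induction s using Finset.induction_on generalizing n a with
  | empty =>
    rw [sum_empty, add_zero, ← nsmul_eq_mul] at h
    exact (smul_eq_zero_iff_right hn).mp h
  | insert j s hj ih =>
    have ih := @ih fun i hi => hf i (mem_insert_of_mem hi)
    have hjj : f j * f j = f j := hf j (mem_insert_self j s)
    rw [sum_insert hj] at h
    -- Multiplying by `f j` absorbs the new summand into the integer: `n` becomes `n + 1`.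
    have hja : f j * a = 0 := by
      refine ih n.succ_ne_zero ?_
      push_cast
      linear_combination f j * h - a * hjj
    exact ih hn (by linear_combination h - hja)

lemma eq_zero_of_sum_isIdempotentElem_eq_zero [IsAddTorsionFree A] {ι : Type*} {f : ι → A}
    {s : Finset ι} (hf : ∀ i ∈ s, IsIdempotentElem (f i)) (hsum : ∑ i ∈ s, f i = 0)
    {j : ι} (hj : j ∈ s) : f j = 0 := by
  classical
  have hjj : f j * f j = f j := hf j hj
  refine eq_zero_of_natCast_add_sum_mul_eq_zero (s.erase j)
    (fun i hi => hf i (mem_of_mem_erase hi)) one_ne_zero ?_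
  rw [← add_sum_erase s f hj] at hsum
  push_cast
  linear_combination f j * hsum - hjj

lemma eq_zero_or_eq_one_of_isIdempotentElem [IsLocalRing A] {a : A} (ha : IsIdempotentElem a) :
    a = 0 ∨ a = 1 := by
  rcases IsLocalRing.isUnit_or_isUnit_one_sub_self a with hunit | hunit
  · exact Or.inr (hunit.mul_left_cancel (ha.eq.trans (mul_one a).symm))
  · exact Or.inl (hunit.mul_right_eq_zero.mp ha.one_sub_mul_self)

lemma adjoin_eq_bot_of_isIdempotentElem (K : Type*) [CommSemiring K] [Algebra K A] [IsLocalRing A]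
    {s : Set A} (hs : ∀ a ∈ s, IsIdempotentElem a) : Algebra.adjoin K s = ⊥ := by
  refine eq_bot_iff.mpr (Algebra.adjoin_le fun a ha => ?_)
  rcases eq_zero_or_eq_one_of_isIdempotentElem (hs a ha) with rfl | rfl
  · exact zero_mem _
  · exact one_mem _

variable (K : Type*) [Field K] [Algebra K A]

lemma isReduced_of_adjoin_isIdempotentElem_eq_top {s : Set A}
    (hs : ∀ a ∈ s, IsIdempotentElem a) (htop : Algebra.adjoin K s = ⊤) : IsReduced A := by
  refine ⟨fun a ha => eq_zero_of_localization a fun P _ => ?_⟩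
  let φ : A →ₐ[K] Localization.AtPrime P := IsScalarTower.toAlgHom K A _
  have hφs : ∀ b ∈ φ '' s, IsIdempotentElem b := by
    rintro _ ⟨b, hb, rfl⟩
    exact (hs b hb).map φ
  have hrange : φ.range = ⊥ := by
    rw [← Algebra.map_top, ← htop, AlgHom.map_adjoin, adjoin_eq_bot_of_isIdempotentElem K hφs]
  obtain ⟨c, hc⟩ : ∃ c, algebraMap K (Localization.AtPrime P) c = φ a :=
    Algebra.mem_bot.mp (hrange ▸ φ.mem_range_self a)
  have hc_nilpotent : IsNilpotent c :=
    (IsNilpotent.map_iff (algebraMap K (Localization.AtPrime P)).injective).mp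
      (hc ▸ ha.map φ)
  change φ a = 0
  rw [← hc, hc_nilpotent.eq_zero, map_zero]

variable {K}

lemma isRadical_of_X_sq_sub_X_mem {σ : Type*} {I : Ideal (MvPolynomial σ K)}
    (hI : ∀ i, (X i : MvPolynomial σ K) ^ 2 - X i ∈ I) : I.IsRadical := by
  rw [Ideal.isRadical_iff_quotient_reduced]
  let π := Ideal.Quotient.mkₐ K I
  refine isReduced_of_adjoin_isIdempotentElem_eq_top K (s := π '' Set.range X) ?_ ?_
  · rintro _ ⟨_, ⟨i, rfl⟩, rfl⟩
    rw [IsIdempotentElem, ← map_mul, ← pow_two]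
    exact Ideal.Quotient.eq.mpr (hI i)
  · rw [← AlgHom.map_adjoin, MvPolynomial.adjoin_range_X, Algebra.map_top]
    exact AlgHom.range_eq_top π |>.mpr (Ideal.Quotient.mkₐ_surjective K I)

end Idempotents

section EdgeWeights

variable {V A : Type*} {G : SimpleGraph V}

/-- The sum `∑_{e ∋ v} x_e` of an edge weighting `x` over the edges incident to `v`. -/
def incidentSum [DecidableEq V] [Fintype G.edgeSet] [AddCommMonoid A] (x : G.edgeSet → A) (v : V) :
    A :=
  ∑ e ∈ univ.filter (fun e : G.edgeSet => v ∈ (e : Sym2 V)), x e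

/-- The relation `x_e * x_{e'} = 0` for distinct edges sharing a vertex. For weights in a domain,
this says that the support of `x` is a matching. -/
def IncidentOrthogonal [MulZeroClass A] (x : G.edgeSet → A) : Prop :=
  ∀ e₁ e₂ : G.edgeSet, e₁ ≠ e₂ → (∃ v : V, v ∈ (e₁ : Sym2 V) ∧ v ∈ (e₂ : Sym2 V)) →
    x e₁ * x e₂ = 0

lemma map_incidentSum [DecidableEq V] [Fintype G.edgeSet] {B F : Type*} [AddCommMonoid A]
    [AddCommMonoid B] [FunLike F A B] [AddMonoidHomClass F A B] (φ : F) (x : G.edgeSet → A)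
    (v : V) : φ (incidentSum x v) = incidentSum (fun e => φ (x e)) v :=
  map_sum φ x _

lemma sum_incidentSum [DecidableEq V] [Fintype V] [Fintype G.edgeSet] [AddCommMonoid A]
    (x : G.edgeSet → A) : ∑ v, incidentSum x v = 2 • ∑ e, x e := by
  have card_endpoints (e : G.edgeSet) : #{v | v ∈ (e : Sym2 V)} = 2 := by
    rw [← Sym2.card_toFinset_of_not_isDiag _ (G.not_isDiag_of_mem_edgeSet e.2)]
    congr 1
    ext v
    simp
  calc ∑ v, incidentSum x v = ∑ e : G.edgeSet, ∑ v with v ∈ (e : Sym2 V), x e := by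
        simp only [incidentSum, sum_filter]
        exact sum_comm
    _ = 2 • ∑ e, x e := by simp only [sum_const, card_endpoints, smul_sum]

variable [DecidableEq V] [Fintype G.edgeSet] {x : G.edgeSet → A}

namespace IncidentOrthogonal

lemma mul_incidentSum [NonUnitalNonAssocSemiring A] (hx : IncidentOrthogonal x) {v : V}
    {e : G.edgeSet} (hv : v ∈ (e : Sym2 V)) : x e * incidentSum x v = x e * x e := by
  rw [incidentSum, mul_sum]
  refine sum_eq_single_of_mem e (by simpa using hv) fun e' he' hne => ?_
  exact hx e e' hne.symm ⟨v, hv, (mem_filter.mp he').2⟩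

lemma isIdempotentElem_of_incidentSum_eq_one [NonAssocSemiring A] (hx : IncidentOrthogonal x)
    (hone : ∀ v, incidentSum x v = 1) (e : G.edgeSet) : IsIdempotentElem (x e) := by
  have h := hx.mul_incidentSum (Sym2.out_fst_mem (e : Sym2 V))
  rw [hone, mul_one] at h
  exact h.symm

lemma isIdempotentElem_incidentSum [NonUnitalNonAssocSemiring A] (hx : IncidentOrthogonal x)
    (hidem : ∀ e, IsIdempotentElem (x e)) (v : V) : IsIdempotentElem (incidentSum x v) :=
  calc incidentSum x v * incidentSum x v
      = ∑ e ∈ univ.filter (fun e : G.edgeSet => v ∈ (e : Sym2 V)), x e * incidentSum x v :=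
        sum_mul ..
    _ = incidentSum x v := sum_congr rfl fun e he =>
        (hx.mul_incidentSum (mem_filter.mp he).2).trans (hidem e)

theorem incidentSum_eq_one_iff [Fintype V] [CommRing A] [IsAddTorsionFree A]
    (hx : IncidentOrthogonal x) {m : ℕ} (hcard : Fintype.card V = 2 * m) :
    (∀ v, incidentSum x v = 1) ↔ (∀ e, IsIdempotentElem (x e)) ∧ ∑ e, x e = m := by
  have hcount := sum_incidentSum x
  constructor
  · intro hone
    refine ⟨hx.isIdempotentElem_of_incidentSum_eq_one hone, nsmul_right_injective two_ne_zero ?_⟩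
    simp only [hone, sum_const, card_univ, hcard] at hcount
    simpa using hcount.symm
  · rintro ⟨hidem, hsum⟩ v
    have hdefect : ∑ v, (1 - incidentSum x v) = 0 := by
      simp [sum_sub_distrib, hcount, hsum, hcard]
    exact (sub_eq_zero.mp <| eq_zero_of_sum_isIdempotentElem_eq_zero
      (fun v _ => (hx.isIdempotentElem_incidentSum hidem v).one_sub) hdefect (mem_univ v)).symm

end IncidentOrthogonal

end EdgeWeights

section MatchingIdeals

variable {V : Type*} (K : Type*) [CommRing K] (G : SimpleGraph V)

/-- The generators `x_e * x_{e'}`, for distinct edges sharing a vertex, that `I₁` and `I₂` have in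
common. -/
def incidentProducts : Set (MvPolynomial G.edgeSet K) :=
  {g | ∃ e₁ e₂ : G.edgeSet, e₁ ≠ e₂ ∧
    (∃ v : V, v ∈ (e₁ : Sym2 V) ∧ v ∈ (e₂ : Sym2 V)) ∧ g = X e₁ * X e₂}

variable {K G} in
lemma incidentProducts_subset_ker_iff {A : Type*} [CommRing A]
    (φ : MvPolynomial G.edgeSet K →+* A) :
    incidentProducts K G ⊆ RingHom.ker φ ↔ IncidentOrthogonal (fun e => φ (X e)) := by
  constructor
  · intro h e₁ e₂ hne hv
    rw [← map_mul]
    exact h ⟨e₁, e₂, hne, hv, rfl⟩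
  · rintro h _ ⟨e₁, e₂, hne, hv, rfl⟩
    exact (map_mul φ _ _).trans (h e₁ e₂ hne hv)

variable [Fintype G.edgeSet]

/-- The ideal `I₁` of the perfect matchings of `G`, over an arbitrary coefficient ring. -/
noncomputable def perfectMatchingIdeal [DecidableEq V] : Ideal (MvPolynomial G.edgeSet K) :=
  Ideal.span ({g | ∃ v : V, g = incidentSum X v - 1} ∪ incidentProducts K G)

/-- The ideal `I₂` of the matchings of `G` with `m` edges, over an arbitrary coefficient ring. -/
noncomputable def sizedMatchingIdeal (m : ℕ) : Ideal (MvPolynomial G.edgeSet K) :=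
  Ideal.span
    ({g | ∃ e : G.edgeSet, g = X e ^ 2 - X e} ∪ incidentProducts K G ∪
      {∑ e : G.edgeSet, X e - (m : MvPolynomial G.edgeSet K)})

variable {K G} {A : Type*} [CommRing A] (φ : MvPolynomial G.edgeSet K →+* A)

lemma perfectMatchingIdeal_le_ker_iff [DecidableEq V] :
    perfectMatchingIdeal K G ≤ RingHom.ker φ ↔
      IncidentOrthogonal (fun e => φ (X e)) ∧ ∀ v, incidentSum (fun e => φ (X e)) v = 1 := by
  have hvertex : (∀ v, incidentSum X v - 1 ∈ RingHom.ker φ) ↔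
      ∀ v, incidentSum (fun e => φ (X e)) v = 1 := by
    simp only [RingHom.mem_ker, map_sub, map_incidentSum, map_one, sub_eq_zero]
  rw [perfectMatchingIdeal, Ideal.span_le, Set.union_subset_iff, incidentProducts_subset_ker_iff,
    and_comm, ← hvertex]
  exact and_congr_right' ⟨fun h v => h ⟨v, rfl⟩, by rintro h _ ⟨v, rfl⟩; exact h v⟩

lemma sizedMatchingIdeal_le_ker_iff (m : ℕ) :
    sizedMatchingIdeal K G m ≤ RingHom.ker φ ↔
      IncidentOrthogonal (fun e => φ (X e)) ∧
        (∀ e, IsIdempotentElem (φ (X e))) ∧ ∑ e, φ (X e) = m := by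
  have hsquare : (∀ e, X e ^ 2 - X e ∈ RingHom.ker φ) ↔ ∀ e, IsIdempotentElem (φ (X e)) := by
    simp only [RingHom.mem_ker, map_sub, map_mul, sub_eq_zero, pow_two, IsIdempotentElem]
  have hcount : ∑ e, X e - (m : MvPolynomial G.edgeSet K) ∈ RingHom.ker φ ↔
      ∑ e, φ (X e) = m := by
    rw [RingHom.mem_ker, map_sub, map_sum, map_natCast, sub_eq_zero]
  rw [sizedMatchingIdeal, Ideal.span_le, Set.union_subset_iff, Set.union_subset_iff,
    incidentProducts_subset_ker_iff, Set.singleton_subset_iff, SetLike.mem_coe, hcount, ← hsquare,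
    and_comm (b := IncidentOrthogonal _), and_assoc]
  exact and_congr_right' <| and_congr_left'
    ⟨fun h e => h ⟨e, rfl⟩, by rintro h _ ⟨e, rfl⟩; exact h e⟩

variable [DecidableEq V]

lemma X_sq_sub_X_mem_perfectMatchingIdeal (e : G.edgeSet) :
    X e ^ 2 - X e ∈ perfectMatchingIdeal K G := by
  obtain ⟨horth, hone⟩ := (perfectMatchingIdeal_le_ker_iff
    (Ideal.Quotient.mk (perfectMatchingIdeal K G))).mp Ideal.mk_ker.ge
  rw [← Ideal.Quotient.eq, map_pow, pow_two]
  exact horth.isIdempotentElem_of_incidentSum_eq_one hone e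

theorem perfectMatchingIdeal_eq_sizedMatchingIdeal [Fintype V] [Algebra ℚ K] {m : ℕ}
    (hcard : Fintype.card V = 2 * m) : perfectMatchingIdeal K G = sizedMatchingIdeal K G m := by
  refine eq_of_forall_ge_iff fun I => ?_
  have : IsAddTorsionFree (MvPolynomial G.edgeSet K ⧸ I) := .of_module_rat _
  rw [← Ideal.mk_ker (I := I), perfectMatchingIdeal_le_ker_iff, sizedMatchingIdeal_le_ker_iff]
  exact and_congr_right fun horth => horth.incidentSum_eq_one_iff hcard

end MatchingIdeals

theorem stmt16_general (K : Type*) [Field K] [CharZero K] {V : Type*} [Fintype V] [DecidableEq V]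
    (G : SimpleGraph V) [Fintype G.edgeSet] (m : ℕ) (hcard : Fintype.card V = 2 * m) :
    (∀ e : G.edgeSet, X e ^ 2 - X e ∈ perfectMatchingIdeal K G) ∧
      (perfectMatchingIdeal K G).IsRadical ∧ (sizedMatchingIdeal K G m).IsRadical ∧
      perfectMatchingIdeal K G = sizedMatchingIdeal K G m := by
  have hradical : (perfectMatchingIdeal K G).IsRadical :=
    isRadical_of_X_sq_sub_X_mem X_sq_sub_X_mem_perfectMatchingIdeal
  have heq := perfectMatchingIdeal_eq_sizedMatchingIdeal (K := K) (G := G) hcard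
  exact ⟨X_sq_sub_X_mem_perfectMatchingIdeal, hradical, heq ▸ hradical, heq⟩

/-- For a graph with `2m` vertices, with
`I₁ = ⟨(∑_{e∋v} x_e) − 1 (v ∈ V), x_e x_{e'} (e ≠ e' sharing a vertex)⟩` and
`I₂ = ⟨x_e² − x_e, x_e x_{e'} (e ≠ e' sharing a vertex), (∑_e x_e) − m⟩`:
(i) every `x_e² − x_e` lies in `I₁`; (ii) `I₁` and `I₂` are radical;
(iii) `I₁ = I₂`. -/
theorem stmt16 {V : Type*} [Fintype V] [DecidableEq V] (G : SimpleGraph V)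
    [DecidableRel G.Adj] (m : ℕ) (hcard : Fintype.card V = 2 * m) :
    (∀ e : ↥G.edgeSet,
      ((X e : MvPolynomial ↥G.edgeSet ℂ) ^ 2 - X e) ∈
        Ideal.span
          ({g : MvPolynomial ↥G.edgeSet ℂ | ∃ v : V, g = pmVertexPoly G v} ∪
            {g : MvPolynomial ↥G.edgeSet ℂ | ∃ e₁ e₂ : ↥G.edgeSet, e₁ ≠ e₂ ∧
              (∃ v : V, v ∈ (e₁ : Sym2 V) ∧ v ∈ (e₂ : Sym2 V)) ∧
              g = X e₁ * X e₂})) ∧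
    (Ideal.span
        ({g : MvPolynomial ↥G.edgeSet ℂ | ∃ v : V, g = pmVertexPoly G v} ∪
          {g : MvPolynomial ↥G.edgeSet ℂ | ∃ e₁ e₂ : ↥G.edgeSet, e₁ ≠ e₂ ∧
            (∃ v : V, v ∈ (e₁ : Sym2 V) ∧ v ∈ (e₂ : Sym2 V)) ∧
            g = X e₁ * X e₂})).IsRadical ∧
    (Ideal.span
        ({g : MvPolynomial ↥G.edgeSet ℂ | ∃ e : ↥G.edgeSet,
            g = (X e) ^ 2 - X e} ∪
          {g : MvPolynomial ↥G.edgeSet ℂ | ∃ e₁ e₂ : ↥G.edgeSet, e₁ ≠ e₂ ∧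
            (∃ v : V, v ∈ (e₁ : Sym2 V) ∧ v ∈ (e₂ : Sym2 V)) ∧
            g = X e₁ * X e₂} ∪
          {(∑ e : ↥G.edgeSet, X e) -
            (m : MvPolynomial ↥G.edgeSet ℂ)})).IsRadical ∧
    Ideal.span
        ({g : MvPolynomial ↥G.edgeSet ℂ | ∃ v : V, g = pmVertexPoly G v} ∪
        {g : MvPolynomial ↥G.edgeSet ℂ | ∃ e₁ e₂ : ↥G.edgeSet, e₁ ≠ e₂ ∧
          (∃ v : V, v ∈ (e₁ : Sym2 V) ∧ v ∈ (e₂ : Sym2 V)) ∧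
          g = X e₁ * X e₂}) =
      Ideal.span
        ({g : MvPolynomial ↥G.edgeSet ℂ | ∃ e : ↥G.edgeSet,
            g = (X e) ^ 2 - X e} ∪
          {g : MvPolynomial ↥G.edgeSet ℂ | ∃ e₁ e₂ : ↥G.edgeSet, e₁ ≠ e₂ ∧
            (∃ v : V, v ∈ (e₁ : Sym2 V) ∧ v ∈ (e₂ : Sym2 V)) ∧
            g = X e₁ * X e₂} ∪
          {(∑ e : ↥G.edgeSet, X e) -
            (m : MvPolynomial ↥G.edgeSet ℂ)}) := by
  exact stmt16_general ℂ G m hcard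
end
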